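/- Let P be any named GS4 derivation with conclusion ⊢Γ,A, where A is any non-atomic named formula. Then the axiom graph of the isolation of A in P is a subgraph of the axiom graph of P: ⟦isl(P,A)⟧ ⊑ ⟦P⟧. -/

import Mathlib

open scoped Classical

noncomputable section

namespace GS4

/-- Named classical propositional formulas over atoms `α`, with names in `ℕ`. -/
inductive NForm (α : Type) : Type
  | atom : ℕ → α → NForm α
  | or   : NForm α → NForm α → NForm α
  | and  : NForm α → NForm α → NForm α

variable {α : Type}

/-- Name-preserving De Morgan negation, w.r.t. an involution `bar` on atoms. -/
def negF (bar : α → α) : NForm α → NForm α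
  | .atom x a => .atom x (bar a)
  | .or A B => .and (negF bar A) (negF bar B)
  | .and A B => .or (negF bar A) (negF bar B)

/-- The set of names occurring in a named formula. -/
def NForm.names : NForm α → Set ℕ
  | .atom x _ => {x}
  | .or A B => A.names ∪ B.names
  | .and A B => A.names ∪ B.names

/-- A named formula is sharing-free if every name occurs at most once in it. -/
def NForm.sharingFree : NForm α → Prop
  | .atom _ _ => True
  | .or A B => A.sharingFree ∧ B.sharingFree ∧ Disjoint A.names B.names
  | .and A B => A.sharingFree ∧ B.sharingFree ∧ Disjoint A.names B.names

def NForm.isAtom : NForm α → Prop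
  | .atom _ _ => True
  | _ => False

/-- Anonymous formulas (shapes): `A ≡ B` iff their shapes coincide. -/
inductive Shape (α : Type) : Type
  | atom : α → Shape α
  | or   : Shape α → Shape α → Shape α
  | and  : Shape α → Shape α → Shape α

def NForm.shape : NForm α → Shape α
  | .atom _ a => .atom a
  | .or A B => .or A.shape B.shape
  | .and A B => .and A.shape B.shape

/-- `HasAtom A x a`: the atomic formula `x:a` occurs in `A`. -/
def HasAtom : NForm α → ℕ → α → Prop
  | .atom y b, x, a => y = x ∧ b = a
  | .or A B, x, a => HasAtom A x a ∨ HasAtom B x a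
  | .and A B, x, a => HasAtom A x a ∨ HasAtom B x a

/-- Names of a finite set of named formulas. -/
def snames (Γ : Finset (NForm α)) : Set ℕ := ⋃ A ∈ Γ, A.names

/-- A finite set of named formulas is sharing-free if all its elements are
sharing-free with pairwise disjoint name sets. -/
def SFSet (Γ : Finset (NForm α)) : Prop :=
  (∀ A ∈ Γ, A.sharingFree) ∧
  ∀ A ∈ Γ, ∀ B ∈ Γ, A ≠ B → Disjoint A.names B.names

/-- `x:a` occurs in some formula of `Γ` (i.e. `Γ[x] = a` for sharing-free `Γ`). -/
def HasAtomS (Γ : Finset (NForm α)) (x : ℕ) (a : α) : Prop :=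
  ∃ A ∈ Γ, HasAtom A x a

/-- Branch sets of named formulas. -/
def BrF : NForm α → Set (Set ℕ)
  | .atom x _ => {{x}}
  | .or A B => {X | ∃ Y ∈ BrF A, ∃ Z ∈ BrF B, X = Y ∪ Z}
  | .and A B => BrF A ∪ BrF B

/-- Branch sets of sequents (finite sharing-free sets of named formulas). -/
def BrS (Γ : Finset (NForm α)) : Set (Set ℕ) :=
  {X | X ⊆ snames Γ ∧ ∀ A ∈ Γ, X ∩ A.names ∈ BrF A}

/-! ## Branch-labeled name graphs -/

/-- A branch-labeled name graph: vertices and a relation between unordered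
pairs of vertices and branch labels. -/
structure BLGraph : Type where
  verts : Set ℕ
  rel : Sym2 ℕ → Set ℕ → Prop

/-- Well-formedness of a bl-graph: related pairs consist of distinct vertices,
labels are sets of vertices, and each edge is included in its labels. -/
def BLGraph.IsBL (G : BLGraph) : Prop :=
  ∀ e X, G.rel e X → ¬ e.IsDiag ∧ X ⊆ G.verts ∧ ∀ v ∈ e, v ∈ X

def BLGraph.Edges (G : BLGraph) : Set (Sym2 ℕ) := {e | ∃ X, G.rel e X}

def BLGraph.Br (G : BLGraph) : Set (Set ℕ) := {X | ∃ e, G.rel e X}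

def BLGraph.union (G H : BLGraph) : BLGraph :=
  ⟨G.verts ∪ H.verts, fun e X => G.rel e X ∨ H.rel e X⟩

/-- Restriction `G↾_S` of a bl-graph. -/
def BLGraph.restrict (G : BLGraph) (S : Set ℕ) : BLGraph :=
  ⟨G.verts ∩ S, fun e X => G.rel e X ∧ X ⊆ S⟩

/-- The interface-relativized edge-branch relation `e ⊰^I_G X`. -/
def BLGraph.relI (G : BLGraph) (I : Set ℕ) (e : Sym2 ℕ) (X : Set ℕ) : Prop :=
  ∃ Y, G.rel e Y ∧ X = Y \ I

/-- `z 0, …, z (n-1)` is an `X`-labeled alternating path between `G` and `H`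
through the interface `I`. -/
def AltPath (G H : BLGraph) (I X : Set ℕ) (n : ℕ) (z : ℕ → ℕ) : Prop :=
  1 < n ∧
  (∀ i < n, ∀ j < n, z i = z j → i = j) ∧
  (∀ i, 0 < i → i + 1 < n → z i ∈ I) ∧
  ((∀ i, i + 1 < n →
      (Even i → G.relI I s(z i, z (i + 1)) X) ∧ (¬ Even i → H.relI I s(z i, z (i + 1)) X)) ∨
   (∀ i, i + 1 < n →
      (Even i → H.relI I s(z i, z (i + 1)) X) ∧ (¬ Even i → G.relI I s(z i, z (i + 1)) X)))

/-- Composition of bl-graphs over an interface `I`. -/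
def BLGraph.comp (G H : BLGraph) (I : Set ℕ) : BLGraph :=
  ⟨(G.verts ∪ H.verts) \ I,
   fun e X => ∃ n z, AltPath G H I X n z ∧ z 0 ∉ I ∧ z (n - 1) ∉ I ∧
     e = s(z 0, z (n - 1))⟩

/-- The weakening operator on bl-graphs: add vertices `V` and extend every
branch label by a member of `Brs`. -/
def blwk (V : Set ℕ) (Brs : Set (Set ℕ)) (G : BLGraph) : BLGraph :=
  ⟨G.verts ∪ V, fun e X => ∃ Y Z, G.rel e Y ∧ Z ∈ Brs ∧ X = Y ∪ Z⟩

/-- The bl-identity graph `id_{A,C}` on a pair of dual formulas. -/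
def blid : NForm α → NForm α → BLGraph
  | .atom x _, .atom y _ => ⟨{x, y}, fun e X => e = s(x, y) ∧ X = {x, y}⟩
  | .or A1 A2, .and C1 C2 =>
      (blwk A2.names (BrF A2) (blid A1 C1)).union (blwk A1.names (BrF A1) (blid A2 C2))
  | .and A1 A2, .or C1 C2 =>
      (blwk C2.names (BrF C2) (blid A1 C1)).union (blwk C1.names (BrF C1) (blid A2 C2))
  | _, _ => ⟨∅, fun _ _ => False⟩

/-! ## Simple name graphs -/

/-- A simple name graph. -/
structure NGraph : Type where
  verts : Set ℕ
  edges : Set (Sym2 ℕ)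

/-- Subgraph relation `H ⊑ G`. -/
def NGraph.Sub (H G : NGraph) : Prop := H.verts ⊆ G.verts ∧ H.edges ⊆ G.edges

def NGraph.union (G H : NGraph) : NGraph := ⟨G.verts ∪ H.verts, G.edges ∪ H.edges⟩

/-- Induced subgraph `G↾_S`. -/
def NGraph.restrict (G : NGraph) (S : Set ℕ) : NGraph :=
  ⟨G.verts ∩ S, {e ∈ G.edges | ∀ v ∈ e, v ∈ S}⟩

/-- Alternating paths between simple name graphs through an interface. -/
def NAltPath (G H : NGraph) (I : Set ℕ) (n : ℕ) (z : ℕ → ℕ) : Prop :=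
  0 < n ∧
  (∀ i < n, ∀ j < n, z i = z j → i = j) ∧
  (∀ i, 0 < i → i + 1 < n → z i ∈ I) ∧
  ((∀ i, i + 1 < n →
      (Even i → s(z i, z (i + 1)) ∈ G.edges) ∧ (¬ Even i → s(z i, z (i + 1)) ∈ H.edges)) ∨
   (∀ i, i + 1 < n →
      (Even i → s(z i, z (i + 1)) ∈ H.edges) ∧ (¬ Even i → s(z i, z (i + 1)) ∈ G.edges)))

/-- Composition of simple name graphs over an interface. -/
def NGraph.comp (G H : NGraph) (I : Set ℕ) : NGraph :=
  ⟨(G.verts ∪ H.verts) \ I,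
   {e | ∃ x y, x ≠ y ∧ x ∈ (G.verts ∪ H.verts) \ I ∧ y ∈ (G.verts ∪ H.verts) \ I ∧
        e = s(x, y) ∧ ∃ n z, NAltPath G H I n z ∧ z 0 = x ∧ z (n - 1) = y}⟩

/-- The identity graph `Id_{A,C}` on a pair of dual formulas. -/
def idg : NForm α → NForm α → NGraph
  | .atom x _, .atom y _ => ⟨{x, y}, {s(x, y)}⟩
  | .or A1 A2, .and C1 C2 => (idg A1 C1).union (idg A2 C2)
  | .and A1 A2, .or C1 C2 => (idg A1 C1).union (idg A2 C2)
  | _, _ => ⟨∅, ∅⟩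

/-- The edgeless (weakening) graph on the names of `Γ`. -/
def wkg (Γ : Finset (NForm α)) : NGraph := ⟨snames Γ, ∅⟩

/-! ## Named GS4 derivations -/

/-- Named GS4 derivation trees. -/
inductive Deriv (α : Type) : Type
  | ax (Γ : Finset (NForm α)) (A C : NForm α)
  | cut (A : NForm α) (P Q : Deriv α)
  | sup (P Q : Deriv α)
  | orI (A B : NForm α) (P : Deriv α)
  | andI (A B : NForm α) (P Q : Deriv α)

/-- Conclusion of a derivation tree. -/
def concl : Deriv α → Finset (NForm α)
  | .ax Γ A C => insert A (insert C Γ)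
  | .cut A P _ => (concl P).erase A
  | .sup P _ => concl P
  | .orI A B P => insert (NForm.or A B) (((concl P).erase A).erase B)
  | .andI A B P _ => insert (NForm.and A B) ((concl P).erase A)

/-- Well-formedness of derivation trees w.r.t. the atom involution `bar`:
each rule is applied correctly to sharing-free named sequents. -/
def WF (bar : α → α) : Deriv α → Prop
  | .ax Γ A C =>
      A.shape = (negF bar C).shape ∧
      A.sharingFree ∧ C.sharingFree ∧ SFSet Γ ∧
      Disjoint A.names C.names ∧
      Disjoint A.names (snames Γ) ∧ Disjoint C.names (snames Γ)
  | .cut A P Q =>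
      WF bar P ∧ WF bar Q ∧
      ∃ Γ : Finset (NForm α), A ∉ Γ ∧ negF bar A ∉ Γ ∧
        concl P = insert A Γ ∧ concl Q = insert (negF bar A) Γ ∧
        A.sharingFree ∧ SFSet Γ ∧ Disjoint A.names (snames Γ)
  | .sup P Q => WF bar P ∧ WF bar Q ∧ concl P = concl Q
  | .orI A B P =>
      WF bar P ∧
      ∃ Γ : Finset (NForm α), A ∉ Γ ∧ B ∉ Γ ∧ A ≠ B ∧
        concl P = insert A (insert B Γ) ∧
        A.sharingFree ∧ B.sharingFree ∧ SFSet Γ ∧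
        Disjoint A.names B.names ∧
        Disjoint A.names (snames Γ) ∧ Disjoint B.names (snames Γ)
  | .andI A B P Q =>
      WF bar P ∧ WF bar Q ∧
      ∃ Γ : Finset (NForm α), A ∉ Γ ∧ B ∉ Γ ∧
        concl P = insert A Γ ∧ concl Q = insert B Γ ∧
        A.sharingFree ∧ B.sharingFree ∧ SFSet Γ ∧
        Disjoint A.names B.names ∧
        Disjoint A.names (snames Γ) ∧ Disjoint B.names (snames Γ)

/-- A derivation is cut-free if it contains no cut rule. -/
def CutFree : Deriv α → Prop
  | .ax _ _ _ => True
  | .cut _ _ _ => False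
  | .sup P Q => CutFree P ∧ CutFree Q
  | .orI _ _ P => CutFree P
  | .andI _ _ P Q => CutFree P ∧ CutFree Q

/-- The branch-labeled axiom graph `⟨⟨P⟩⟩` of a derivation. -/
def blaxg : Deriv α → BLGraph
  | .ax Γ A C => blwk (snames Γ) (BrS Γ) (blid A C)
  | .cut A P Q => BLGraph.comp (blaxg P) (blaxg Q) A.names
  | .sup P Q => (blaxg P).union (blaxg Q)
  | .orI _ _ P => blaxg P
  | .andI _ _ P Q => (blaxg P).union (blaxg Q)

/-- The (simple) axiom graph `⟦P⟧` of a derivation. -/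
def axg : Deriv α → NGraph
  | .ax Γ A C => (wkg Γ).union (idg A C)
  | .cut A P Q => NGraph.comp (axg P) (axg Q) A.names
  | .sup P Q => (axg P).union (axg Q)
  | .orI _ _ P => axg P
  | .andI _ _ P Q => (axg P).union (axg Q)

/-! ## Inversion and isolation -/

/-- Inversion of a disjunction `D ∨ E` in the conclusion. -/
def inv (D E : NForm α) : Deriv α → Deriv α
  | .ax Γ A C =>
      if A = NForm.or D E then
        match C with
        | .and C1 C2 =>
            .andI C1 C2 (.ax (insert E Γ) D C1) (.ax (insert D Γ) E C2)
        | _ => .ax Γ A C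
      else if C = NForm.or D E then
        match A with
        | .and A1 A2 =>
            .andI A1 A2 (.ax (insert E Γ) A1 D) (.ax (insert D Γ) A2 E)
        | _ => .ax Γ A C
      else
        .ax (insert D (insert E (Γ.erase (NForm.or D E)))) A C
  | .cut A P Q => .cut A (inv D E P) (inv D E Q)
  | .sup P Q => .sup (inv D E P) (inv D E Q)
  | .orI A B P => if A = D ∧ B = E then P else .orI A B (inv D E P)
  | .andI A B P Q => .andI A B (inv D E P) (inv D E Q)

/-- Left inversion of a conjunction `D ∧ E` in the conclusion. -/
def invl (D E : NForm α) : Deriv α → Deriv α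
  | .ax Γ A C =>
      if A = NForm.and D E then
        match C with
        | .or C1 C2 => .orI C1 C2 (.ax (insert C2 Γ) D C1)
        | _ => .ax Γ A C
      else if C = NForm.and D E then
        match A with
        | .or A1 A2 => .orI A1 A2 (.ax (insert A2 Γ) A1 D)
        | _ => .ax Γ A C
      else
        .ax (insert D (Γ.erase (NForm.and D E))) A C
  | .cut A P Q => .cut A (invl D E P) (invl D E Q)
  | .sup P Q => .sup (invl D E P) (invl D E Q)
  | .orI A B P => .orI A B (invl D E P)
  | .andI A B P Q => if A = D ∧ B = E then P else .andI A B (invl D E P) (invl D E Q)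

/-- Right inversion of a conjunction `D ∧ E` in the conclusion. -/
def invr (D E : NForm α) : Deriv α → Deriv α
  | .ax Γ A C =>
      if A = NForm.and D E then
        match C with
        | .or C1 C2 => .orI C1 C2 (.ax (insert C1 Γ) E C2)
        | _ => .ax Γ A C
      else if C = NForm.and D E then
        match A with
        | .or A1 A2 => .orI A1 A2 (.ax (insert A1 Γ) A2 E)
        | _ => .ax Γ A C
      else
        .ax (insert E (Γ.erase (NForm.and D E))) A C
  | .cut A P Q => .cut A (invr D E P) (invr D E Q)
  | .sup P Q => .sup (invr D E P) (invr D E Q)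
  | .orI A B P => .orI A B (invr D E P)
  | .andI A B P Q => if A = D ∧ B = E then Q else .andI A B (invr D E P) (invr D E Q)

/-- Isolation of a non-atomic formula in the conclusion. -/
def isl : NForm α → Deriv α → Deriv α
  | .or A B, P => .orI A B (inv A B P)
  | .and A B, P => .andI A B (invl A B P) (invr A B P)
  | .atom _ _, P => P

/-- Totality of a bl-graph w.r.t. a sharing-free named sequent. -/
def Total (bar : α → α) (G : BLGraph) (Γ : Finset (NForm α)) : Prop :=
  G.verts = snames Γ ∧
  G.Br = BrS Γ ∧
  ∀ x y : ℕ, s(x, y) ∈ G.Edges →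
    ∀ a b : α, HasAtomS Γ x a → HasAtomS Γ y b → a = bar b

end GS4

/-
Inversion replaces a principal axiom by axioms on the immediate subformulas of its two formulas,
whose identity graphs are parts of the original one; at a rule introducing the inverted formula it
returns a premise; everywhere else it commutes with the rules. Composition and union of name
graphs are monotone, so the inclusion propagates from these two cases to the whole derivation.
The names moved into the context of an axiom are no new vertices, because the axiom graph of an
axiom already spans all names of its conclusion.
-/

namespace GS4

theorem NAltPath.mono {G H G' H' : NGraph} (hG : G.edges ⊆ G'.edges) (hH : H.edges ⊆ H'.edges)
    {I : Set ℕ} {n : ℕ} {z : ℕ → ℕ} (hz : NAltPath G H I n z) : NAltPath G' H' I n z := by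
  obtain ⟨hpos, hinj, hI, halt⟩ := hz
  refine ⟨hpos, hinj, hI, halt.imp (fun h i hi ↦ ?_) (fun h i hi ↦ ?_)⟩
  · exact (h i hi).imp (fun hedge heven ↦ hG (hedge heven)) (fun hedge hodd ↦ hH (hedge hodd))
  · exact (h i hi).imp (fun hedge heven ↦ hH (hedge heven)) (fun hedge hodd ↦ hG (hedge hodd))

namespace NGraph

variable {G H G' H' K : NGraph}

theorem Sub.refl (G : NGraph) : G.Sub G := ⟨subset_rfl, subset_rfl⟩

theorem Sub.trans (hGH : G.Sub H) (hHK : H.Sub K) : G.Sub K :=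
  ⟨hGH.1.trans hHK.1, hGH.2.trans hHK.2⟩

theorem sub_union_left (G H : NGraph) : G.Sub (G.union H) :=
  ⟨Set.subset_union_left, Set.subset_union_left⟩

theorem sub_union_right (G H : NGraph) : H.Sub (G.union H) :=
  ⟨Set.subset_union_right, Set.subset_union_right⟩

theorem union_sub (hG : G.Sub K) (hH : H.Sub K) : (G.union H).Sub K :=
  ⟨Set.union_subset hG.1 hH.1, Set.union_subset hG.2 hH.2⟩

theorem Sub.union (hG : G.Sub G') (hH : H.Sub H') : (G.union H).Sub (G'.union H') :=
  union_sub (hG.trans (sub_union_left G' H')) (hH.trans (sub_union_right G' H'))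

theorem Sub.comp (hG : G.Sub G') (hH : H.Sub H') (I : Set ℕ) :
    (G.comp H I).Sub (G'.comp H' I) := by
  have hverts : (G.verts ∪ H.verts) \ I ⊆ (G'.verts ∪ H'.verts) \ I :=
    Set.sdiff_subset_sdiff_left (Set.union_subset_union hG.1 hH.1)
  refine ⟨hverts, ?_⟩
  rintro _ ⟨x, y, hxy, hx, hy, rfl, n, z, hz, hzx, hzy⟩
  exact ⟨x, y, hxy, hverts hx, hverts hy, rfl, n, z, hz.mono hG.2 hH.2, hzx, hzy⟩

end NGraph

variable {α : Type} {bar : α → α} {Γ Δ : Finset (NForm α)} {A B C D E F A' C' : NForm α}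
  {P Q : Deriv α}

theorem snames_insert (A : NForm α) (Γ : Finset (NForm α)) :
    snames (insert A Γ) = A.names ∪ snames Γ :=
  Finset.set_biUnion_insert A Γ NForm.names

theorem snames_mono (h : Γ ⊆ Δ) : snames Γ ⊆ snames Δ :=
  Set.biUnion_subset_biUnion_left h

theorem names_subset_snames (h : A ∈ Γ) : A.names ⊆ snames Γ :=
  Set.subset_biUnion_of_mem (u := NForm.names) h

theorem names_subset_snames_of_or_mem (h : NForm.or A B ∈ Γ) :
    A.names ⊆ snames Γ ∧ B.names ⊆ snames Γ :=
  Set.union_subset_iff.1 (names_subset_snames h)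

theorem names_subset_snames_of_and_mem (h : NForm.and A B ∈ Γ) :
    A.names ⊆ snames Γ ∧ B.names ⊆ snames Γ :=
  Set.union_subset_iff.1 (names_subset_snames h)

theorem exists_eq_and_of_or_shape_eq (h : (NForm.or A B).shape = (negF bar C).shape) :
    ∃ C₁ C₂, C = .and C₁ C₂ :=
  match C, h with
  | .and C₁ C₂, _ => ⟨C₁, C₂, rfl⟩

theorem exists_eq_or_of_and_shape_eq (h : (NForm.and A B).shape = (negF bar C).shape) :
    ∃ C₁ C₂, C = .or C₁ C₂ :=
  match C, h with
  | .or C₁ C₂, _ => ⟨C₁, C₂, rfl⟩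

theorem exists_eq_and_of_shape_eq_negF_or (h : A.shape = (negF bar (.or B C)).shape) :
    ∃ A₁ A₂, A = .and A₁ A₂ :=
  match A, h with
  | .and A₁ A₂, _ => ⟨A₁, A₂, rfl⟩

theorem exists_eq_or_of_shape_eq_negF_and (h : A.shape = (negF bar (.and B C)).shape) :
    ∃ A₁ A₂, A = .or A₁ A₂ :=
  match A, h with
  | .or A₁ A₂, _ => ⟨A₁, A₂, rfl⟩

theorem idg_verts : ∀ {A C : NForm α}, A.shape = (negF bar C).shape →
    (idg A C).verts = A.names ∪ C.names
  | .atom _ _, .atom _ _, _ => rfl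
  | .or _ _, .and _ _, h => by
    obtain ⟨h₁, h₂⟩ := Shape.or.inj h
    simp only [idg, NGraph.union, NForm.names, idg_verts h₁, idg_verts h₂,
      Set.union_union_union_comm]
  | .and _ _, .or _ _, h => by
    obtain ⟨h₁, h₂⟩ := Shape.and.inj h
    simp only [idg, NGraph.union, NForm.names, idg_verts h₁, idg_verts h₂,
      Set.union_union_union_comm]

theorem axg_ax_verts (hAC : A.shape = (negF bar C).shape) :
    (axg (.ax Γ A C)).verts = snames (concl (.ax Γ A C)) := by
  simp only [axg, wkg, NGraph.union, concl, snames_insert, idg_verts hAC]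
  rw [Set.union_comm, Set.union_assoc]

theorem axg_ax_sub_axg_ax (hAC : A.shape = (negF bar C).shape)
    (hΔ : snames Δ ⊆ snames (concl (.ax Γ A C))) (hid : (idg A' C').Sub (idg A C)) :
    (axg (.ax Δ A' C')).Sub (axg (.ax Γ A C)) := by
  have hwk : (wkg Δ).Sub (axg (.ax Γ A C)) :=
    ⟨hΔ.trans (axg_ax_verts hAC).ge, Set.empty_subset _⟩
  exact NGraph.union_sub hwk (hid.trans (NGraph.sub_union_right _ _))

theorem left_mem_concl_ax (Γ : Finset (NForm α)) (A C : NForm α) : A ∈ concl (.ax Γ A C) :=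
  Finset.mem_insert_self A (insert C Γ)

theorem right_mem_concl_ax (Γ : Finset (NForm α)) (A C : NForm α) : C ∈ concl (.ax Γ A C) :=
  Finset.mem_insert_of_mem (Finset.mem_insert_self C Γ)

theorem snames_subset_snames_concl_ax : snames Γ ⊆ snames (concl (.ax Γ A C)) :=
  snames_mono fun _ h ↦ Finset.mem_insert_of_mem (Finset.mem_insert_of_mem h)

theorem axg_ax_insert_sub_axg_ax (hAC : A.shape = (negF bar C).shape)
    (hB : B.names ⊆ snames (concl (.ax Γ A C))) (hid : (idg A' C').Sub (idg A C)) :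
    (axg (.ax (insert B Γ) A' C')).Sub (axg (.ax Γ A C)) := by
  refine axg_ax_sub_axg_ax hAC ?_ hid
  rw [snames_insert]
  exact Set.union_subset hB snames_subset_snames_concl_ax

theorem snames_erase_subset_snames_concl_ax (B : NForm α) :
    snames (Γ.erase B) ⊆ snames (concl (.ax Γ A C)) :=
  (snames_mono (Γ.erase_subset B)).trans snames_subset_snames_concl_ax

theorem axg_andI_sub {G : NGraph} (hP : (axg P).Sub G) (hQ : (axg Q).Sub G) :
    (axg (.andI A B P Q)).Sub G :=
  NGraph.union_sub hP hQ

theorem mem_concl_of_mem_concl_cut (hP : WF bar (.cut A P Q)) (hF : F ∈ concl (.cut A P Q)) :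
    F ∈ concl P ∧ F ∈ concl Q := by
  obtain ⟨-, -, Γ, -, -, hcP, hcQ, -⟩ := hP
  obtain ⟨hFA, hFP⟩ := Finset.mem_erase.1 hF
  have hFΓ : F ∈ Γ := Finset.mem_of_mem_insert_of_ne (hcP ▸ hFP) hFA
  exact ⟨hFP, hcQ ▸ Finset.mem_insert_of_mem hFΓ⟩

theorem mem_concl_of_mem_concl_orI (hF : F ∈ concl (.orI A B P)) (hne : F ≠ .or A B) :
    F ∈ concl P :=
  Finset.mem_of_mem_erase (Finset.mem_of_mem_erase (Finset.mem_of_mem_insert_of_ne hF hne))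

theorem mem_concl_of_mem_concl_andI (hP : WF bar (.andI A B P Q))
    (hF : F ∈ concl (.andI A B P Q)) (hne : F ≠ .and A B) : F ∈ concl P ∧ F ∈ concl Q := by
  obtain ⟨-, -, Γ, -, -, hcP, hcQ, -⟩ := hP
  obtain ⟨hFA, hFP⟩ := Finset.mem_erase.1 (Finset.mem_of_mem_insert_of_ne hF hne)
  have hFΓ : F ∈ Γ := Finset.mem_of_mem_insert_of_ne (hcP ▸ hFP) hFA
  exact ⟨hFP, hcQ ▸ Finset.mem_insert_of_mem hFΓ⟩

/-- Inversion procedures for a formula `F`, abstracting the common form of `inv`, `invl` and `invr`: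
`f` commutes with all rules, except that at axioms and at rules introducing `F` it is only required
not to enlarge the axiom graph. -/
structure IsInversion (bar : α → α) (F : NForm α) (f : Deriv α → Deriv α) : Prop where
  axg_ax_sub : ∀ Γ A C, A.shape = (negF bar C).shape → F ∈ concl (.ax Γ A C) →
    (axg (f (.ax Γ A C))).Sub (axg (.ax Γ A C))
  map_cut : ∀ A P Q, f (.cut A P Q) = .cut A (f P) (f Q)
  map_sup : ∀ P Q, f (.sup P Q) = .sup (f P) (f Q)
  axg_orI_sub : ∀ A B P, F = .or A B → (axg (f (.orI A B P))).Sub (axg (.orI A B P))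
  map_orI : ∀ A B P, F ≠ .or A B → f (.orI A B P) = .orI A B (f P)
  axg_andI_sub : ∀ A B P Q, F = .and A B → (axg (f (.andI A B P Q))).Sub (axg (.andI A B P Q))
  map_andI : ∀ A B P Q, F ≠ .and A B → f (.andI A B P Q) = .andI A B (f P) (f Q)

theorem IsInversion.axg_sub {f : Deriv α → Deriv α} (hf : IsInversion bar F f) (hP : WF bar P)
    (hF : F ∈ concl P) : (axg (f P)).Sub (axg P) := by
  induction P with
  | ax Γ A C => exact hf.axg_ax_sub Γ A C hP.1 hF
  | cut A P Q ihP ihQ =>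
    obtain ⟨hFP, hFQ⟩ := mem_concl_of_mem_concl_cut hP hF
    rw [hf.map_cut]
    exact (ihP hP.1 hFP).comp (ihQ hP.2.1 hFQ) A.names
  | sup P Q ihP ihQ =>
    obtain ⟨hwP, hwQ, hconcl⟩ := hP
    rw [hf.map_sup]
    exact (ihP hwP hF).union (ihQ hwQ (hconcl ▸ hF))
  | orI A B P ih =>
    by_cases hne : F = .or A B
    · exact hf.axg_orI_sub A B P hne
    · rw [hf.map_orI A B P hne]
      exact ih hP.1 (mem_concl_of_mem_concl_orI hF hne)
  | andI A B P Q ihP ihQ =>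
    by_cases hne : F = .and A B
    · exact hf.axg_andI_sub A B P Q hne
    · obtain ⟨hFP, hFQ⟩ := mem_concl_of_mem_concl_andI hP hF hne
      rw [hf.map_andI A B P Q hne]
      exact (ihP hP.1 hFP).union (ihQ hP.2.1 hFQ)

theorem axg_inv_ax_sub (hAC : A.shape = (negF bar C).shape) (hF : .or D E ∈ concl (.ax Γ A C)) :
    (axg (inv D E (.ax Γ A C))).Sub (axg (.ax Γ A C)) := by
  obtain ⟨hD, hE⟩ := names_subset_snames_of_or_mem hF
  unfold inv
  split_ifs with hA hC
  · subst hA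
    obtain ⟨C₁, C₂, rfl⟩ := exists_eq_and_of_or_shape_eq hAC
    exact axg_andI_sub (axg_ax_insert_sub_axg_ax hAC hE (NGraph.sub_union_left _ _))
      (axg_ax_insert_sub_axg_ax hAC hD (NGraph.sub_union_right _ _))
  · subst hC
    obtain ⟨A₁, A₂, rfl⟩ := exists_eq_and_of_shape_eq_negF_or hAC
    exact axg_andI_sub (axg_ax_insert_sub_axg_ax hAC hE (NGraph.sub_union_left _ _))
      (axg_ax_insert_sub_axg_ax hAC hD (NGraph.sub_union_right _ _))
  · refine axg_ax_sub_axg_ax hAC ?_ (NGraph.Sub.refl _)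
    rw [snames_insert, snames_insert]
    exact Set.union_subset hD (Set.union_subset hE (snames_erase_subset_snames_concl_ax _))

theorem axg_invl_ax_sub (hAC : A.shape = (negF bar C).shape) (hF : .and D E ∈ concl (.ax Γ A C)) :
    (axg (invl D E (.ax Γ A C))).Sub (axg (.ax Γ A C)) := by
  unfold invl
  split_ifs with hA hC
  · subst hA
    obtain ⟨C₁, C₂, rfl⟩ := exists_eq_or_of_and_shape_eq hAC
    obtain ⟨-, hC₂⟩ :=
      names_subset_snames_of_or_mem (right_mem_concl_ax Γ (.and D E) (.or C₁ C₂))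
    exact axg_ax_insert_sub_axg_ax hAC hC₂ (NGraph.sub_union_left _ _)
  · subst hC
    obtain ⟨A₁, A₂, rfl⟩ := exists_eq_or_of_shape_eq_negF_and hAC
    obtain ⟨-, hA₂⟩ :=
      names_subset_snames_of_or_mem (left_mem_concl_ax Γ (.or A₁ A₂) (.and D E))
    exact axg_ax_insert_sub_axg_ax hAC hA₂ (NGraph.sub_union_left _ _)
  · refine axg_ax_sub_axg_ax hAC ?_ (NGraph.Sub.refl _)
    rw [snames_insert]
    exact Set.union_subset (names_subset_snames_of_and_mem hF).1
      (snames_erase_subset_snames_concl_ax _)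

theorem axg_invr_ax_sub (hAC : A.shape = (negF bar C).shape) (hF : .and D E ∈ concl (.ax Γ A C)) :
    (axg (invr D E (.ax Γ A C))).Sub (axg (.ax Γ A C)) := by
  unfold invr
  split_ifs with hA hC
  · subst hA
    obtain ⟨C₁, C₂, rfl⟩ := exists_eq_or_of_and_shape_eq hAC
    obtain ⟨hC₁, -⟩ :=
      names_subset_snames_of_or_mem (right_mem_concl_ax Γ (.and D E) (.or C₁ C₂))
    exact axg_ax_insert_sub_axg_ax hAC hC₁ (NGraph.sub_union_right _ _)
  · subst hC
    obtain ⟨A₁, A₂, rfl⟩ := exists_eq_or_of_shape_eq_negF_and hAC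
    obtain ⟨hA₁, -⟩ :=
      names_subset_snames_of_or_mem (left_mem_concl_ax Γ (.or A₁ A₂) (.and D E))
    exact axg_ax_insert_sub_axg_ax hAC hA₁ (NGraph.sub_union_right _ _)
  · refine axg_ax_sub_axg_ax hAC ?_ (NGraph.Sub.refl _)
    rw [snames_insert]
    exact Set.union_subset (names_subset_snames_of_and_mem hF).2
      (snames_erase_subset_snames_concl_ax _)

theorem isInversion_inv (bar : α → α) (D E : NForm α) :
    IsInversion bar (.or D E) (inv D E) where
  axg_ax_sub _ _ _ := axg_inv_ax_sub
  map_cut _ _ _ := rfl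
  map_sup _ _ := rfl
  axg_orI_sub A B P h := by
    obtain ⟨rfl, rfl⟩ := NForm.or.inj h
    rw [inv, if_pos ⟨rfl, rfl⟩]
    exact NGraph.Sub.refl (axg P)
  map_orI A B P h := if_neg fun ⟨hA, hB⟩ ↦ h (by rw [hA, hB])
  axg_andI_sub _ _ _ _ h := nomatch h
  map_andI _ _ _ _ _ := rfl

theorem isInversion_invl (bar : α → α) (D E : NForm α) :
    IsInversion bar (.and D E) (invl D E) where
  axg_ax_sub _ _ _ := axg_invl_ax_sub
  map_cut _ _ _ := rfl
  map_sup _ _ := rfl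
  axg_orI_sub _ _ _ h := nomatch h
  map_orI _ _ _ _ := rfl
  axg_andI_sub A B P Q h := by
    obtain ⟨rfl, rfl⟩ := NForm.and.inj h
    rw [invl, if_pos ⟨rfl, rfl⟩]
    exact NGraph.sub_union_left (axg P) (axg Q)
  map_andI A B P Q h := if_neg fun ⟨hA, hB⟩ ↦ h (by rw [hA, hB])

theorem isInversion_invr (bar : α → α) (D E : NForm α) :
    IsInversion bar (.and D E) (invr D E) where
  axg_ax_sub _ _ _ := axg_invr_ax_sub
  map_cut _ _ _ := rfl
  map_sup _ _ := rfl
  axg_orI_sub _ _ _ h := nomatch h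
  map_orI _ _ _ _ := rfl
  axg_andI_sub A B P Q h := by
    obtain ⟨rfl, rfl⟩ := NForm.and.inj h
    rw [invr, if_pos ⟨rfl, rfl⟩]
    exact NGraph.sub_union_right (axg P) (axg Q)
  map_andI A B P Q h := if_neg fun ⟨hA, hB⟩ ↦ h (by rw [hA, hB])

theorem axg_isl_sub_general (hP : WF bar P) (hA : A ∈ concl P) (hnonatom : ¬ A.isAtom) :
    (axg (isl A P)).Sub (axg P) :=
  match A, hA, hnonatom with
  | .atom _ _, _, hnonatom => absurd trivial hnonatom
  | .or D E, hA, _ => (isInversion_inv bar D E).axg_sub hP hA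
  | .and D E, hA, _ => axg_andI_sub ((isInversion_invl bar D E).axg_sub hP hA)
      ((isInversion_invr bar D E).axg_sub hP hA)

end GS4

/-- the axiom graph does not increase under isolation of a
non-atomic formula in the conclusion. -/
theorem GS4.axg_isl_sub {α : Type} (bar : α → α)
    (hbar : Function.Involutive bar) (hfix : ∀ a, bar a ≠ a)
    (P : GS4.Deriv α) (hP : GS4.WF bar P)
    (A : GS4.NForm α) (hA : A ∈ GS4.concl P) (hnonatom : ¬ A.isAtom) :
    (GS4.axg (GS4.isl A P)).Sub (GS4.axg P) :=
  GS4.axg_isl_sub_general hP hA hnonatom
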